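/- Let u : ℝ³ → ℝ be a smooth solution of the Pavlov equation u_yy = u_tx + u_y·u_xx − u_x·u_xy (coordinates (t,x,y)). Then the function φ' := u_t − y·u_x + 2x satisfies the linearized equation φ'_yy = φ'_tx + u_y·φ'_xx + u_xx·φ'_y − u_x·φ'_xy − u_xy·φ'_x at every point of ℝ³ (i.e., φ' is a symmetry of the Pavlov equation). -/

import Mathlib

/-- Partial derivative of a function on `ℝ³` in the direction `v`. -/
noncomputable def pd (v : ℝ × ℝ × ℝ) (f : ℝ × ℝ × ℝ → ℝ) : ℝ × ℝ × ℝ → ℝ :=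
  fun p => fderiv ℝ f p v

/-- Coordinates are `(t, x, y)`. -/
noncomputable def dt : (ℝ × ℝ × ℝ → ℝ) → ℝ × ℝ × ℝ → ℝ := pd (1, 0, 0)
noncomputable def dx : (ℝ × ℝ × ℝ → ℝ) → ℝ × ℝ × ℝ → ℝ := pd (0, 1, 0)
noncomputable def dy : (ℝ × ℝ × ℝ → ℝ) → ℝ × ℝ × ℝ → ℝ := pd (0, 0, 1)

/-- The symmetry `φ' = u_t − y·u_x + 2x` of the Pavlov equation. -/
noncomputable def phi' (u : ℝ × ℝ × ℝ → ℝ) : ℝ × ℝ × ℝ → ℝ :=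
  fun p => dt u p - p.2.2 * dx u p + 2 * p.2.1

theorem pd_smooth {f : ℝ × ℝ × ℝ → ℝ} (v : ℝ × ℝ × ℝ) (hf : ContDiff ℝ (⊤ : ℕ∞) f) :
    ContDiff ℝ (⊤ : ℕ∞) (pd v f) := by
  have h : ContDiff ℝ (⊤ : ℕ∞) (fderiv ℝ f) := hf.fderiv_right (by norm_cast)
  exact h.clm_apply contDiff_const

theorem smooth_diff {f : ℝ × ℝ × ℝ → ℝ} (hf : ContDiff ℝ (⊤ : ℕ∞) f) : Differentiable ℝ f :=
  hf.differentiable (by simp)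

theorem pd_comm {f : ℝ × ℝ × ℝ → ℝ} (v w : ℝ × ℝ × ℝ) (hf : ContDiff ℝ (⊤ : ℕ∞) f) :
    pd v (pd w f) = pd w (pd v f) := by
  have h : ContDiff ℝ (⊤ : ℕ∞) (fderiv ℝ f) := hf.fderiv_right (by norm_cast)
  have hd : Differentiable ℝ (fderiv ℝ f) := h.differentiable (by simp)
  have key : ∀ (a b p : ℝ × ℝ × ℝ), pd a (pd b f) p = fderiv ℝ (fderiv ℝ f) p a b := by
    intro a b p
    have h1 : HasFDerivAt (pd b f)
        ((ContinuousLinearMap.apply ℝ ℝ b).comp (fderiv ℝ (fderiv ℝ f) p)) p :=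
      (ContinuousLinearMap.apply ℝ ℝ b).hasFDerivAt.comp p (hd p).hasFDerivAt
    change fderiv ℝ (pd b f) p a = _
    rw [h1.fderiv]
    rfl
  funext p
  rw [key, key]
  have hs : IsSymmSndFDerivAt ℝ f p := hf.contDiffAt.isSymmSndFDerivAt (by
    rw [minSmoothness_of_isRCLikeNormedField]; exact WithTop.coe_le_coe.2 (le_top : (2 : ℕ∞) ≤ ⊤))
  exact hs v w

theorem pd_add {f g : ℝ × ℝ × ℝ → ℝ} (v p : ℝ × ℝ × ℝ) (hf : Differentiable ℝ f)
    (hg : Differentiable ℝ g) : pd v (fun q => f q + g q) p = pd v f p + pd v g p := by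
  have h := ((hf p).hasFDerivAt.add (hg p).hasFDerivAt).fderiv
  change fderiv ℝ (f + g) p v = _
  rw [h]; rfl

theorem pd_sub {f g : ℝ × ℝ × ℝ → ℝ} (v p : ℝ × ℝ × ℝ) (hf : Differentiable ℝ f)
    (hg : Differentiable ℝ g) : pd v (fun q => f q - g q) p = pd v f p - pd v g p := by
  have h := ((hf p).hasFDerivAt.sub (hg p).hasFDerivAt).fderiv
  change fderiv ℝ (f - g) p v = _
  rw [h]; rfl

theorem pd_mul {f g : ℝ × ℝ × ℝ → ℝ} (v p : ℝ × ℝ × ℝ) (hf : Differentiable ℝ f)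
    (hg : Differentiable ℝ g) :
    pd v (fun q => f q * g q) p = f p * pd v g p + g p * pd v f p := by
  have h := ((hf p).hasFDerivAt.mul (hg p).hasFDerivAt).fderiv
  change fderiv ℝ (f * g) p v = _
  rw [h]; rfl

theorem pd_const (c : ℝ) (v p : ℝ × ℝ × ℝ) : pd v (fun _ => c) p = 0 := by
  simp [pd]

theorem pd_x (v p : ℝ × ℝ × ℝ) : pd v (fun q => q.2.1) p = v.2.1 := by
  have h : HasFDerivAt (fun q : ℝ × ℝ × ℝ => q.2.1) ((ContinuousLinearMap.fst ℝ ℝ ℝ).comp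
    (ContinuousLinearMap.snd ℝ ℝ (ℝ × ℝ))) p :=
    ((ContinuousLinearMap.fst ℝ ℝ ℝ).comp
    (ContinuousLinearMap.snd ℝ ℝ (ℝ × ℝ))).hasFDerivAt
  change fderiv ℝ _ p v = _
  rw [h.fderiv]; rfl

theorem pd_y (v p : ℝ × ℝ × ℝ) : pd v (fun q => q.2.2) p = v.2.2 := by
  have h : HasFDerivAt (fun q : ℝ × ℝ × ℝ => q.2.2) ((ContinuousLinearMap.snd ℝ ℝ ℝ).comp
    (ContinuousLinearMap.snd ℝ ℝ (ℝ × ℝ))) p :=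
    ((ContinuousLinearMap.snd ℝ ℝ ℝ).comp
    (ContinuousLinearMap.snd ℝ ℝ (ℝ × ℝ))).hasFDerivAt
  change fderiv ℝ _ p v = _
  rw [h.fderiv]; rfl

theorem pd_one {A B : ℝ × ℝ × ℝ → ℝ} (v : ℝ × ℝ × ℝ) (hA : ContDiff ℝ (⊤ : ℕ∞) A)
    (hB : ContDiff ℝ (⊤ : ℕ∞) B) :
    pd v (fun q => A q - q.2.2 * B q + 2 * q.2.1) =
      fun q => pd v A q - (q.2.2 * pd v B q + B q * v.2.2) + 2 * v.2.1 := by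
  have dA := smooth_diff hA
  have dB := smooth_diff hB
  funext p
  rw [pd_add v p (by fun_prop) (by fun_prop), pd_sub v p (by fun_prop) (by fun_prop),
    pd_mul v p (by fun_prop) (by fun_prop), pd_mul v p (by fun_prop) (by fun_prop),
    pd_const, pd_x, pd_y]
  ring

theorem pd_two {A B : ℝ × ℝ × ℝ → ℝ} (w v p : ℝ × ℝ × ℝ) (hA : ContDiff ℝ (⊤ : ℕ∞) A)
    (hB : ContDiff ℝ (⊤ : ℕ∞) B) :
    pd w (pd v (fun q => A q - q.2.2 * B q + 2 * q.2.1)) p =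
      pd w (pd v A) p - (p.2.2 * pd w (pd v B) p + pd v B p * w.2.2 + pd w B p * v.2.2) := by
  have dA := smooth_diff (pd_smooth v hA)
  have dB := smooth_diff hB
  have dB' := smooth_diff (pd_smooth v hB)
  rw [pd_one v hA hB]
  rw [pd_add w p (by fun_prop) (by fun_prop), pd_sub w p (by fun_prop) (by fun_prop),
    pd_add w p (by fun_prop) (by fun_prop),
    pd_mul w p (by fun_prop) (by fun_prop), pd_mul w p (by fun_prop) (by fun_prop),
    pd_const, pd_const, pd_y]
  ring

theorem pd_sol {a b c d e f : ℝ × ℝ × ℝ → ℝ} (v p : ℝ × ℝ × ℝ) (h : ∀ p, a p = b p + c p * d p - e p * f p)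
    (hb : Differentiable ℝ b) (hc : Differentiable ℝ c)
    (hd : Differentiable ℝ d) (he : Differentiable ℝ e) (hf : Differentiable ℝ f) :
    pd v a p = pd v b p + (c p * pd v d p + d p * pd v c p)
      - (e p * pd v f p + f p * pd v e p) := by
  rw [show a = fun p => b p + c p * d p - e p * f p from funext h]
  rw [pd_sub v p (by fun_prop) (by fun_prop), pd_add v p (by fun_prop) (by fun_prop),
    pd_mul v p (by fun_prop) (by fun_prop), pd_mul v p (by fun_prop) (by fun_prop)]

/-- If `u` is a smooth solution of the Pavlov equation
`u_yy = u_tx + u_y·u_xx − u_x·u_xy`, then `φ' = u_t − y·u_x + 2x` satisfies the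
linearized equation
`φ'_yy = φ'_tx + u_y·φ'_xx + u_xx·φ'_y − u_x·φ'_xy − u_xy·φ'_x`. -/
theorem pavlov_symmetry' (u : ℝ × ℝ × ℝ → ℝ)
    (hu : ContDiff ℝ (⊤ : ℕ∞) u)
    (hsol : ∀ p : ℝ × ℝ × ℝ,
      dy (dy u) p = dx (dt u) p + dy u p * dx (dx u) p - dx u p * dy (dx u) p) :
    ∀ p : ℝ × ℝ × ℝ,
      dy (dy (phi' u)) p =
        dx (dt (phi' u)) p + dy u p * dx (dx (phi' u)) p + dx (dx u) p * dy (phi' u) p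
          - dx u p * dy (dx (phi' u)) p - dy (dx u) p * dx (phi' u) p := by
  intro p
  unfold phi' dt dx dy at *
  generalize hT : ((1, 0, 0) : ℝ × ℝ × ℝ) = T at *
  generalize hX : ((0, 1, 0) : ℝ × ℝ × ℝ) = X at *
  generalize hY : ((0, 0, 1) : ℝ × ℝ × ℝ) = Y at *
  have s1 : ∀ v, ContDiff ℝ (⊤ : ℕ∞) (pd v u) := fun v => pd_smooth v hu
  have d1 : ∀ v, Differentiable ℝ (pd v u) := fun v => smooth_diff (s1 v)
  have d2 : ∀ v w, Differentiable ℝ (pd w (pd v u)) := fun v w => smooth_diff (pd_smooth w (s1 v))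
  have key := fun v => pd_sol v p hsol (d2 T X) (d1 Y) (d2 X X) (d1 X) (d2 X Y)
  have kT := key T
  have kX := key X
  rw [pd_two Y Y p (s1 T) (s1 X), pd_two X T p (s1 T) (s1 X), pd_two X X p (s1 T) (s1 X),
    pd_two Y X p (s1 T) (s1 X), pd_one Y (s1 T) (s1 X), pd_one X (s1 T) (s1 X)]
  -- commute the outer derivative `v` of a third derivative to the inside
  have c3 : ∀ v a b, pd v (pd a (pd b u)) = pd a (pd b (pd v u)) := by
    intro v a b
    rw [pd_comm v a (s1 b), pd_comm v b hu]
  rw [c3 T, c3 T, c3 T, c3 T, pd_comm T Y hu, pd_comm T X hu] at kT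
  rw [c3 X Y Y, c3 X Y X, pd_comm X Y hu] at kX
  rw [pd_comm X T (s1 T)] at *
  rw [pd_comm X T (s1 X)]
  rw [c3 X X T, pd_comm X T (s1 X)] at kX
  subst hT hX hY
  simp only
  linear_combination kT - p.2.2 * kX
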